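/- Let K be a field of characteristic zero, A_n(K) the Weyl algebra with a fixed partition of {1,…,n} into blocks of sizes n_1,…,n_p, and M a left A_n(K)-module generated by finitely many elements f_1,…,f_m, with the p-dimensional filtration M_{r_1,…,r_p} = Σ_{i=1}^m W_{r_1,…,r_p} f_i. Then there exists a numerical polynomial φ_M(t_1,…,t_p) in p variables such that φ_M(r_1,…,r_p) = dim_K M_{r_1,…,r_p} for all sufficiently large (r_1,…,r_p) ∈ ℤ^p, and n_i ≤ deg_{t_i} φ_M ≤ 2n_i for i = 1,…,p (hence n ≤ deg φ_M ≤ 2n). -/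

import Mathlib

set_option synthInstance.maxHeartbeats 400000
set_option maxHeartbeats 1000000

open MvPolynomial

noncomputable def weylGens (n : ℕ) (K : Type) [Field K] :
    Set (Module.End K (MvPolynomial (Fin n) K)) :=
  (Set.range fun i : Fin n =>
      (LinearMap.mulLeft K (X i : MvPolynomial (Fin n) K) : Module.End K (MvPolynomial (Fin n) K))) ∪
  (Set.range fun i : Fin n => ((pderiv i).toLinearMap : Module.End K (MvPolynomial (Fin n) K)))

noncomputable def WeylAlg (n : ℕ) (K : Type) [Field K] :
    Subalgebra K (Module.End K (MvPolynomial (Fin n) K)) :=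
  Algebra.adjoin K (weylGens n K)

noncomputable def wx (n : ℕ) (K : Type) [Field K] (i : Fin n) : WeylAlg n K :=
  ⟨LinearMap.mulLeft K (X i), Algebra.subset_adjoin (Set.mem_union_left _ ⟨i, rfl⟩)⟩

noncomputable def wd (n : ℕ) (K : Type) [Field K] (i : Fin n) : WeylAlg n K :=
  ⟨(pderiv i).toLinearMap, Algebra.subset_adjoin (Set.mem_union_right _ ⟨i, rfl⟩)⟩

noncomputable def wMono (n : ℕ) (K : Type) [Field K] (α β : Fin n → ℕ) : WeylAlg n K :=
  (((List.finRange n).map fun i => wx n K i ^ α i).prod) *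
  (((List.finRange n).map fun i => wd n K i ^ β i).prod)

def ordTot (n : ℕ) (α β : Fin n → ℕ) : ℕ := (∑ i, α i) + ∑ i, β i

noncomputable def bernW (n : ℕ) (K : Type) [Field K] (r : ℤ) : Submodule K (WeylAlg n K) :=
  Submodule.span K {D | ∃ α β : Fin n → ℕ, (ordTot n α β : ℤ) ≤ r ∧ D = wMono n K α β}

noncomputable def modFil (n : ℕ) (K : Type) [Field K] (M : Type) [AddCommGroup M]
    [Module K M] [Module (WeylAlg n K) M] (m : ℕ) (g : Fin m → M) (r : ℤ) :
    Submodule K M :=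
  Submodule.span K {x | ∃ i, ∃ D ∈ bernW n K r, x = D • g i}


/-- A polynomial in `p` variables with rational coefficients is numerical if it takes
integer values for all sufficiently large integer arguments. -/
def IsNumerical {p : ℕ} (f : MvPolynomial (Fin p) ℚ) : Prop :=
  ∃ s : Fin p → ℤ, ∀ r : Fin p → ℤ, (∀ i, s i ≤ r i) →
    ∃ z : ℤ, MvPolynomial.eval (fun i => (r i : ℚ)) f = (z : ℚ)

/-- The `j`-th order of the monomial `x^α ∂^β` with respect to the partition `B`. -/
def ordBlk {n p : ℕ} (B : Fin n → Fin p) (α β : Fin n → ℕ) (j : Fin p) : ℕ :=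
  ∑ i ∈ Finset.univ.filter (fun i => B i = j), (α i + β i)

/-- The component `W_{r_1,…,r_p}` of the `p`-dimensional filtration of the Weyl algebra. -/
noncomputable def bernWB (n p : ℕ) (K : Type) [Field K] (B : Fin n → Fin p)
    (r : Fin p → ℤ) : Submodule K (WeylAlg n K) :=
  Submodule.span K
    {D | ∃ α β : Fin n → ℕ, (∀ j, (ordBlk B α β j : ℤ) ≤ r j) ∧ D = wMono n K α β}

/-- The component `M_{r_1,…,r_p} = Σ_i W_{r_1,…,r_p} g_i` of the induced filtration of `M`. -/
noncomputable def modFilB (n p : ℕ) (K : Type) [Field K] (B : Fin n → Fin p)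
    (M : Type) [AddCommGroup M] [Module K M] [Module (WeylAlg n K) M]
    (m : ℕ) (g : Fin m → M) (r : Fin p → ℤ) : Submodule K M :=
  Submodule.span K {x | ∃ i, ∃ D ∈ bernWB n p K B r, x = D • g i}

/-!
Write `x^α d^β • g i` for the translates of the generators under the normally ordered monomials, and
order them by a monomial order. Multiplying a translate by `x i` or `d i` gives the next translate
up to preceding ones of no larger multidegree. Call a translate with exponent `e` reducible with
slack `q` if it is a combination of preceding translates of multidegree at most `deg e + q`; the
reducible pairs `(e, q)` then form an upper set of `ℕ^(2n) × ℕ^p`, which by Dickson's lemma has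
finitely many minimal elements. The dimension of the `r`-th filtration step is the number of
irreducible pairs `(e, r - deg e)`, and inclusion-exclusion over the minimal elements expresses it
for large `r` as an alternating sum of products of binomial coefficients, of degree at most `2 n_j`
in `r_j`.

For the lower bound, a nonzero `D` in `W_a` cannot annihilate `M_{a+s}`: otherwise its commutators
with the generators, which lower the degree, would annihilate smaller steps, until a nonzero
constant annihilates `M_s ≠ 0`. Hence `W_a` embeds into `Hom(M_{a+s}, M_{2a+s})`, so that
`dim W_a ≤ φ(a+s) φ(2a+s)`. Letting `a` grow along a set `J` of blocks gives a polynomial of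
degree at least `2 ∑ n_j` on the left and at most twice the degree of `φ` in the variables of `J`
on the right.
-/

/-! ### Counting exponents by multidegree -/

section Counting

theorem card_biUnion_piAntidiag_univ (F : Type*) [Fintype F] [DecidableEq F] (k : ℕ) :
    ((Finset.range (k + 1)).biUnion (Finset.piAntidiag (Finset.univ : Finset F))).card =
      (k + Fintype.card F).choose (Fintype.card F) := by
  have card_piAntidiag (i : ℕ) :
      (Finset.piAntidiag (Finset.univ : Finset F) i).card = (Fintype.card F).multichoose i := by
    rw [← Finset.map_sym_eq_piAntidiag, Finset.card_map, Finset.sym_univ, Finset.card_univ,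
      Sym.card_sym_eq_multichoose]
  rw [Finset.card_biUnion fun i _ j _ hij => Finset.disjoint_left.2 fun f hi hj =>
    hij ((Finset.mem_piAntidiag.1 hi).1.symm.trans (Finset.mem_piAntidiag.1 hj).1)]
  simp only [card_piAntidiag, Nat.sum_range_multichoose]

variable {σ κ : Type*}

theorem induction_add_single {motive : (σ →₀ ℕ) → Prop} (e : σ →₀ ℕ) (zero : motive 0)
    (add_single : ∀ e s, motive e → motive (e + Finsupp.single s 1)) : motive e := by
  classical
  obtain ⟨m, rfl⟩ := Multiset.toFinsupp.surjective e
  induction m using Multiset.induction with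
  | empty => simpa using zero
  | cons s m ih =>
    rw [← Multiset.singleton_add, add_comm, map_add, Multiset.toFinsupp_singleton]
    exact add_single _ s ih

theorem mapDomain_apply_eq_sum_fiber [Fintype σ] [DecidableEq κ] (b : σ → κ) (e : σ →₀ ℕ) (j : κ) :
    e.mapDomain b j = ∑ s with b s = j, e s := by
  simp [Finsupp.mapDomain, Finsupp.sum_fintype, Finsupp.single_apply, Finset.sum_filter]

theorem apply_le_mapDomain_apply (b : σ → κ) (e : σ →₀ ℕ) (s : σ) :
    e s ≤ e.mapDomain b (b s) := by
  have h := Finsupp.mapDomain_mono (f := b) (Finsupp.single_le_iff.2 (le_refl (e s)))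
  rw [Finsupp.mapDomain_single] at h
  exact Finsupp.single_le_iff.1 h

theorem finite_setOf_mapDomain_le [Finite σ] (b : σ → κ) (r : κ →₀ ℕ) :
    {e : σ →₀ ℕ | e.mapDomain b ≤ r}.Finite := by
  classical
  exact (Set.finite_Iic (Finsupp.equivFunOnFinite.symm (r ∘ b))).subset fun e he s =>
    (apply_le_mapDomain_apply b e s).trans (he (b s))

/-- The exponents whose multidegree is at most `r`, where the variable `s` lies in the block `b s`
and so has degree the unit vector at `b s`. The multidegree of `e` is `e.mapDomain b`. -/
noncomputable def degLE [Finite σ] (b : σ → κ) (r : κ →₀ ℕ) : Finset (σ →₀ ℕ) :=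
  (finite_setOf_mapDomain_le b r).toFinset

@[simp]
theorem mem_degLE [Finite σ] {b : σ → κ} {r : κ →₀ ℕ} {e : σ →₀ ℕ} :
    e ∈ degLE b r ↔ e.mapDomain b ≤ r :=
  (finite_setOf_mapDomain_le b r).mem_toFinset

theorem Iic_subset_degLE [Finite σ] [DecidableEq σ] (b : σ → κ) (e : σ →₀ ℕ) :
    Finset.Iic e ⊆ degLE b (e.mapDomain b) :=
  fun _ h => mem_degLE.2 (Finsupp.mapDomain_mono (Finset.mem_Iic.1 h))

theorem card_degLE [Finite σ] [Fintype κ] (b : σ → κ) (r : κ →₀ ℕ) :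
    (degLE b r).card =
      ∏ j, (r j + Nat.card {s // b s = j}).choose (Nat.card {s // b s = j}) := by
  classical
  have := Fintype.ofFinite σ
  let S (j : κ) : Finset ({s // b s = j} → ℕ) :=
    (Finset.range (r j + 1)).biUnion (Finset.piAntidiag Finset.univ)
  have mem_S (j : κ) (f : {s // b s = j} → ℕ) : f ∈ S j ↔ ∑ s, f s ≤ r j := by
    simp [S]
  have sum_fiber (e : σ →₀ ℕ) (j : κ) : ∑ s : {s // b s = j}, e s = e.mapDomain b j := by
    rw [mapDomain_apply_eq_sum_fiber]
    exact (Finset.sum_subtype _ (by simp) e).symm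
  have card_eq : (degLE b r).card = (Fintype.piFinset S).card := by
    refine Finset.card_bij (fun e _ j s => e s) (fun e he => ?_) (fun e _ e' _ h => ?_)
      (fun f hf => ?_)
    · rw [Fintype.mem_piFinset]
      intro j
      rw [mem_S, sum_fiber]
      exact mem_degLE.1 he j
    · ext s
      exact congrFun (congrFun h (b s)) ⟨s, rfl⟩
    · obtain ⟨e, he⟩ : ∃ e : σ →₀ ℕ, ∀ j (s : {s // b s = j}), e s = f j s :=
        ⟨Finsupp.equivFunOnFinite.symm fun s => f (b s) ⟨s, rfl⟩, by rintro _ ⟨s, rfl⟩; rfl⟩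
      refine ⟨e, mem_degLE.2 fun j => ?_, by ext j s; exact he j s⟩
      rw [← sum_fiber, Finset.sum_congr rfl fun s _ => he j s]
      exact (mem_S j _).1 (Fintype.mem_piFinset.1 hf j)
  rw [card_eq, Fintype.card_piFinset]
  simp only [S, card_biUnion_piAntidiag_univ, Nat.card_eq_fintype_card]

theorem card_filter_degLE [Finite σ] (b : σ → κ) {r q : κ →₀ ℕ} {c : σ →₀ ℕ}
    (h : c.mapDomain b + q ≤ r) [DecidablePred fun e : σ →₀ ℕ => (c, q) ≤ (e, r - e.mapDomain b)] :
    ((degLE b r).filter fun e => (c, q) ≤ (e, r - e.mapDomain b)).card =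
      (degLE b (r - (c.mapDomain b + q))).card := by
  have h_iff (d : σ →₀ ℕ) : (d + c).mapDomain b ≤ r ∧ q ≤ r - (d + c).mapDomain b ↔
      d.mapDomain b ≤ r - (c.mapDomain b + q) := by
    rw [le_tsub_iff_right h, ← add_assoc, ← Finsupp.mapDomain_add]
    exact ⟨fun ⟨h₁, h₂⟩ => (le_tsub_iff_left h₁).1 h₂, fun h₁ =>
      have h₂ := le_self_add.trans h₁
      ⟨h₂, (le_tsub_iff_left h₂).2 h₁⟩⟩
  symm
  refine Finset.card_bij (fun d _ => d + c) (fun d hd => ?_) (fun _ _ _ _ => add_right_cancel)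
    (fun e he => ?_)
  · obtain ⟨h₁, h₂⟩ := (h_iff d).2 (mem_degLE.1 hd)
    exact Finset.mem_filter.2 ⟨mem_degLE.2 h₁, le_add_self, h₂⟩
  · obtain ⟨h₁, hce, h₂⟩ := Finset.mem_filter.1 he
    obtain ⟨d, rfl⟩ := le_iff_exists_add'.1 hce
    exact ⟨d, mem_degLE.2 ((h_iff d).1 ⟨mem_degLE.1 h₁, h₂⟩), rfl⟩

theorem exists_finset_mem_iff_exists_le {α : Type*} [PartialOrder α] [WellQuasiOrderedLE α]
    {U : Set α} (hU : IsUpperSet U) : ∃ G : Finset α, ∀ a, a ∈ U ↔ ∃ c ∈ G, c ≤ a := by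
  have hfin : {a | Minimal (· ∈ U) a}.Finite :=
    WellQuasiOrderedLE.finite_of_isAntichain (setOfPred_minimal_antichain _)
  refine ⟨hfin.toFinset, fun a => ⟨fun ha => ?_, fun ⟨c, hc, hca⟩ => ?_⟩⟩
  · obtain ⟨c, hca, hc⟩ := exists_minimal_le_of_wellFoundedLT (· ∈ U) a ha
    exact ⟨c, hfin.mem_toFinset.2 hc, hca⟩
  · exact hU hca (hfin.mem_toFinset.1 hc).prop

theorem card_filter_notMem_eq_sum_powerset {R α β : Type*} [CommRing R] [SemilatticeSup α]
    [OrderBot α] {U : Set α} [DecidablePred (· ∈ U)] [DecidableLE α] {G : Finset α}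
    (hG : ∀ a, a ∈ U ↔ ∃ c ∈ G, c ≤ a) (A : Finset β) (f : β → α) :
    ((A.filter fun e => f e ∉ U).card : R) =
      ∑ T ∈ G.powerset, (-1) ^ T.card * ((A.filter fun e => T.sup id ≤ f e).card : R) := by
  have indicator_eq (a : α) : (if a ∉ U then (1 : R) else 0) =
      ∑ T ∈ G.powerset, (-1) ^ T.card * (if T.sup id ≤ a then 1 else 0) := by
    calc (if a ∉ U then (1 : R) else 0)
      _ = ∏ c ∈ G, (1 + (-1) * if c ≤ a then 1 else 0) := by
        split_ifs with ha
        · obtain ⟨c, hc, hca⟩ := (hG a).1 ha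
          exact (Finset.prod_eq_zero hc (by simp [hca])).symm
        · refine (Finset.prod_eq_one fun c hc => ?_).symm
          rw [if_neg fun hca => ha ((hG a).2 ⟨c, hc, hca⟩), mul_zero, add_zero]
      _ = _ := by
        rw [Finset.prod_one_add]
        simp only [Finset.prod_mul_distrib, Finset.prod_const, Finset.prod_ite_zero, one_pow,
          Finset.sup_le_iff, id]
  simp only [Finset.card_filter, Nat.cast_sum, Nat.cast_ite, Nat.cast_one, Nat.cast_zero,
    indicator_eq, Finset.mul_sum]
  exact Finset.sum_comm

theorem degreeOf_aeval_X_le {R : Type*} [CommSemiring R] [Nontrivial R] [DecidableEq κ]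
    (Q : Polynomial R) (i j : κ) :
    (Polynomial.aeval (X j : MvPolynomial κ R) Q).degreeOf i ≤
      if i = j then Q.natDegree else 0 := by
  rw [Polynomial.aeval_eq_sum_range]
  refine (degreeOf_sum_le _ _ _).trans (Finset.sup_le fun k hk => ?_)
  rw [smul_eq_C_mul]
  refine (degreeOf_C_mul_le _ _ _).trans ?_
  split_ifs with h
  · rw [h, degreeOf_X_self_pow]
    exact Finset.mem_range_succ_iff.1 hk
  · exact (degreeOf_X_pow_of_ne _ h).le

theorem eval_aeval_X {R : Type*} [CommSemiring R] (x : κ → R) (Q : Polynomial R) (j : κ) :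
    eval x (Polynomial.aeval (X j) Q) = Q.eval (x j) := by
  rw [← Polynomial.coe_aeval_eq_eval, ← aeval_eq_eval, ← Polynomial.aeval_algHom_apply, aeval_X]

theorem exists_hilbertPoly_card_filter_notMem [Finite σ] [Finite κ] (b : σ → κ)
    {U : Set ((σ →₀ ℕ) × (κ →₀ ℕ))} [DecidablePred (· ∈ U)] (hU : IsUpperSet U) :
    ∃ φ : MvPolynomial κ ℚ, (∀ j, φ.degreeOf j ≤ Nat.card {s // b s = j}) ∧
      ∃ r₀ : κ →₀ ℕ, ∀ r ≥ r₀, eval (fun j => (r j : ℚ)) φ =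
        ((degLE b r).filter fun e => (e, r - e.mapDomain b) ∉ U).card := by
  classical
  have := Fintype.ofFinite κ
  obtain ⟨G, hG⟩ := exists_finset_mem_iff_exists_le hU
  let N (j : κ) : ℕ := Nat.card {s // b s = j}
  let minDeg (T : Finset ((σ →₀ ℕ) × (κ →₀ ℕ))) : κ →₀ ℕ :=
    (T.sup id).1.mapDomain b + (T.sup id).2
  have minDeg_mono : Monotone minDeg := fun T T' h => add_le_add
    (Finsupp.mapDomain_mono (Finset.sup_mono (f := id) h : T.sup id ≤ T'.sup id).1)
    (Finset.sup_mono (f := id) h : T.sup id ≤ T'.sup id).2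
  refine ⟨∑ T ∈ G.powerset, C ((-1) ^ T.card) *
    ∏ j, Polynomial.aeval (X j) (Polynomial.preHilbertPoly ℚ (N j) (minDeg T j)),
    fun i => ?_, minDeg G, fun r hr => ?_⟩
  · refine (degreeOf_sum_le _ _ _).trans (Finset.sup_le fun T _ => ?_)
    refine (degreeOf_C_mul_le _ _ _).trans ((degreeOf_prod_le _ _ _).trans ?_)
    refine (Finset.sum_le_sum fun j _ => degreeOf_aeval_X_le _ i j).trans ?_
    simp [Polynomial.natDegree_preHilbertPoly, N]
  · rw [card_filter_notMem_eq_sum_powerset hG, map_sum]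
    refine Finset.sum_congr rfl fun T hT => ?_
    have hTr : minDeg T ≤ r := (minDeg_mono (Finset.mem_powerset.1 hT)).trans hr
    rw [map_mul, eval_C, map_prod, card_filter_degLE b hTr, card_degLE, Nat.cast_prod]
    congr 1
    refine Finset.prod_congr rfl fun j _ => ?_
    rw [eval_aeval_X]
    exact Polynomial.preHilbertPoly_eq_choose_sub_add ℚ (N j) (hTr j)

end Counting

/-! ### Standard terms -/

section LeadingTerms

variable {K M σ κ τ : Type*} [Field K] [AddCommGroup M] [Module K M]

theorem finrank_sup_span_singleton (W : Submodule K M) [FiniteDimensional K W] {x : M}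
    (hx : x ∉ W) :
    Module.finrank K (W ⊔ Submodule.span K {x} : Submodule K M) = Module.finrank K W + 1 := by
  have hx0 : x ≠ 0 := fun h => hx (h ▸ W.zero_mem)
  have h := Submodule.finrank_sup_add_finrank_inf_eq W (Submodule.span K {x})
  rwa [((Submodule.disjoint_span_singleton' hx0).2 hx).eq_bot, finrank_bot,
    finrank_span_singleton hx0] at h

open Classical in
theorem finrank_span_image_eq_card {Λ Γ : Type*} [LinearOrder Γ] {key : Λ → Γ}
    (hkey : Function.Injective key) (v : Λ → M) (S : Finset Λ) :
    Module.finrank K (Submodule.span K (v '' S)) =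
      (S.filter fun l => v l ∉ Submodule.span K (v '' {w | w ∈ S ∧ key w < key l})).card := by
  induction S using Finset.induction_on_max_value key with
  | empty =>
    rw [Finset.coe_empty, Set.image_empty, Submodule.span_empty, finrank_bot, Finset.filter_empty,
      Finset.card_empty]
  | @insert a S ha hmax ih =>
    have hlt : ∀ l ∈ S, key l < key a := fun l hl =>
      (hmax l hl).lt_of_ne fun h => ha (hkey h ▸ hl)
    have below_a : {w | w ∈ insert a S ∧ key w < key a} = (S : Set Λ) := by
      ext w
      simp only [Finset.mem_insert, Set.mem_ofPred_eq, Finset.mem_coe]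
      refine ⟨fun ⟨hw, hwa⟩ => hw.resolve_left ?_, fun hw => ⟨Or.inr hw, hlt w hw⟩⟩
      rintro rfl
      exact hwa.false
    have below_of_mem : ∀ l ∈ S, {w | w ∈ insert a S ∧ key w < key l} =
        {w | w ∈ S ∧ key w < key l} := by
      intro l hl
      ext w
      simp only [Finset.mem_insert, Set.mem_ofPred_eq]
      refine ⟨fun ⟨hw, hwl⟩ => ⟨hw.resolve_left ?_, hwl⟩, fun ⟨hw, hwl⟩ => ⟨Or.inr hw, hwl⟩⟩
      rintro rfl
      exact (hwl.trans (hlt l hl)).false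
    have : FiniteDimensional K (Submodule.span K (v '' S)) :=
      FiniteDimensional.span_of_finite K (S.finite_toSet.image v)
    rw [Finset.filter_insert, below_a, Finset.filter_congr fun l hl => by rw [below_of_mem l hl],
      Finset.coe_insert, Set.image_insert_eq, Submodule.span_insert, sup_comm]
    split_ifs with h
    · rw [← ih, sup_eq_left.2 ((Submodule.span_singleton_le_iff_mem _ _).2 h)]
    · rw [Finset.card_insert_of_notMem fun hmem => ha (Finset.mem_filter.1 hmem).1, ← ih,
        finrank_sup_span_singleton _ h]

variable (K) in
/-- For a family of vectors indexed by pairs (exponent, generator), the span of those whose exponent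
has multidegree at most `r`. -/
def degSpan (b : σ → κ) (v : (σ →₀ ℕ) × τ → M) (r : κ →₀ ℕ) : Submodule K M :=
  Submodule.span K (v '' {w | w.1.mapDomain b ≤ r})

theorem mem_degSpan {b : σ → κ} (v : (σ →₀ ℕ) × τ → M) {r : κ →₀ ℕ} {w : (σ →₀ ℕ) × τ}
    (hw : w.1.mapDomain b ≤ r) : v w ∈ degSpan K b v r :=
  Submodule.subset_span ⟨w, hw, rfl⟩

theorem degSpan_mono (b : σ → κ) (v : (σ →₀ ℕ) × τ → M) : Monotone (degSpan K b v) :=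
  fun _ _ h => Submodule.span_mono (Set.image_mono fun _ hw => le_trans hw h)

instance [Finite σ] [Finite τ] (b : σ → κ) (v : (σ →₀ ℕ) × τ → M) (r : κ →₀ ℕ) :
    FiniteDimensional K (degSpan K b v r) :=
  FiniteDimensional.span_of_finite K <|
    (((finite_setOf_mapDomain_le b r).prod Set.finite_univ).subset fun _ hw =>
      ⟨hw, trivial⟩).image v

/-- The position of a term (exponent, generator) in the term order refining `o`. -/
noncomputable def termKey (o : MonomialOrder σ) (w : (σ →₀ ℕ) × τ) : o.syn ×ₗ τ :=
  toLex (o.toSyn w.1, w.2)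

theorem termKey_injective (o : MonomialOrder σ) :
    Function.Injective (termKey o : (σ →₀ ℕ) × τ → o.syn ×ₗ τ) := fun _ _ h =>
  Prod.ext (o.toSyn.injective (Prod.ext_iff.1 (toLex.injective h)).1)
    (Prod.ext_iff.1 (toLex.injective h)).2

variable [LinearOrder τ]

theorem termKey_add_lt_termKey_add {o : MonomialOrder σ} {w l : (σ →₀ ℕ) × τ}
    (h : termKey o w < termKey o l) (c : σ →₀ ℕ) :
    termKey o (w.1 + c, w.2) < termKey o (l.1 + c, l.2) := by
  simp only [termKey, Prod.Lex.toLex_lt_toLex, map_add, add_lt_add_iff_right,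
    add_left_inj] at h ⊢
  exact h

theorem termKey_lt_termKey_of_lt (o : MonomialOrder σ) {e e' : σ →₀ ℕ} (h : e < e') (i j : τ) :
    termKey o (e, i) < termKey o (e', j) :=
  Prod.Lex.toLex_lt_toLex.2 (Or.inl (o.toSyn_strictMono h))

variable (K) in
/-- The span of the members of the family `v` of multidegree at most `r` that precede the term `l`
in the term order refining `o`. -/
def initSpan (b : σ → κ) (o : MonomialOrder σ) (v : (σ →₀ ℕ) × τ → M) (r : κ →₀ ℕ)
    (l : (σ →₀ ℕ) × τ) : Submodule K M :=
  Submodule.span K (v '' {w | w.1.mapDomain b ≤ r ∧ termKey o w < termKey o l})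

theorem mem_initSpan {b : σ → κ} {o : MonomialOrder σ} (v : (σ →₀ ℕ) × τ → M) {r : κ →₀ ℕ}
    {w l : (σ →₀ ℕ) × τ} (hr : w.1.mapDomain b ≤ r) (hl : termKey o w < termKey o l) :
    v w ∈ initSpan K b o v r l :=
  Submodule.subset_span ⟨w, ⟨hr, hl⟩, rfl⟩

theorem initSpan_mono (b : σ → κ) (o : MonomialOrder σ) (v : (σ →₀ ℕ) × τ → M)
    {r r' : κ →₀ ℕ} {l l' : (σ →₀ ℕ) × τ} (hr : r ≤ r') (hl : termKey o l ≤ termKey o l') :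
    initSpan K b o v r l ≤ initSpan K b o v r' l' :=
  Submodule.span_mono (Set.image_mono fun _ hw => ⟨hw.1.trans hr, hw.2.trans_le hl⟩)

variable (K) in
/-- For each variable `s` some linear endomorphism multiplies every member of the family `v` by `s`
up to terms of no larger multidegree that precede the product. -/
def HasLeadingTerms (b : σ → κ) (o : MonomialOrder σ) (v : (σ →₀ ℕ) × τ → M) : Prop :=
  ∀ s, ∃ T : M →ₗ[K] M, ∀ e i, T (v (e, i)) - v (e + Finsupp.single s 1, i) ∈
    initSpan K b o v ((e + Finsupp.single s 1).mapDomain b) (e + Finsupp.single s 1, i)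

variable (K) in
/-- The pairs `(e, q)` for which the `i`-th term with exponent `e` is not a standard term, because a
linear combination of preceding terms of multidegree at most that of `e` plus `q` equals it. -/
def reducibleSet (b : σ → κ) (o : MonomialOrder σ)
    (v : (σ →₀ ℕ) × τ → M) (i : τ) : Set ((σ →₀ ℕ) × (κ →₀ ℕ)) :=
  {a | v (a.1, i) ∈ initSpan K b o v (a.1.mapDomain b + a.2) (a.1, i)}

theorem HasLeadingTerms.add_single_mem_initSpan {b : σ → κ} {o : MonomialOrder σ}
    {v : (σ →₀ ℕ) × τ → M} (hv : HasLeadingTerms K b o v) {e : σ →₀ ℕ} {i : τ} {q : κ →₀ ℕ}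
    (h : v (e, i) ∈ initSpan K b o v (e.mapDomain b + q) (e, i)) (s : σ) :
    v (e + Finsupp.single s 1, i) ∈ initSpan K b o v
      ((e + Finsupp.single s 1).mapDomain b + q) (e + Finsupp.single s 1, i) := by
  obtain ⟨T, hT⟩ := hv s
  have T_mem : T (v (e, i)) ∈ initSpan K b o v
      ((e + Finsupp.single s 1).mapDomain b + q) (e + Finsupp.single s 1, i) := by
    rw [← Submodule.mem_comap]
    refine Submodule.span_le.2 ?_ h
    rintro _ ⟨w, ⟨hwr, hwl⟩, rfl⟩
    have hlt := termKey_add_lt_termKey_add hwl (Finsupp.single s 1)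
    have hle : (w.1 + Finsupp.single s 1).mapDomain b ≤
        (e + Finsupp.single s 1).mapDomain b + q := by
      rw [Finsupp.mapDomain_add, Finsupp.mapDomain_add, add_right_comm]
      exact add_le_add_left hwr _
    rw [SetLike.mem_coe, Submodule.mem_comap,
      ← sub_add_cancel (T (v w)) (v (w.1 + Finsupp.single s 1, w.2))]
    exact add_mem (initSpan_mono b o v hle hlt.le (hT w.1 w.2)) (mem_initSpan v hle hlt)
  rw [← sub_sub_cancel (T (v (e, i))) (v (e + _, i))]
  exact sub_mem T_mem (initSpan_mono b o v le_self_add le_rfl (hT e i))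

theorem HasLeadingTerms.isUpperSet_reducibleSet {b : σ → κ} {o : MonomialOrder σ}
    {v : (σ →₀ ℕ) × τ → M} (hv : HasLeadingTerms K b o v) (i : τ) :
    IsUpperSet (reducibleSet K b o v i) := by
  rintro ⟨e, q⟩ ⟨e', q'⟩ ⟨he, hq⟩ h
  obtain ⟨c, rfl⟩ := exists_add_of_le he
  have h' : v (e, i) ∈ initSpan K b o v (e.mapDomain b + q') (e, i) :=
    initSpan_mono b o v (add_le_add_right hq _) le_rfl h
  clear he hq h
  change v (e + c, i) ∈ initSpan K b o v ((e + c).mapDomain b + q') (e + c, i)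
  induction c using induction_add_single with
  | zero => simpa using h'
  | add_single c s ih =>
    rw [← add_assoc]
    exact hv.add_single_mem_initSpan ih s

open Classical in
theorem finrank_degSpan [Finite σ] [Fintype τ] (b : σ → κ) (o : MonomialOrder σ)
    (v : (σ →₀ ℕ) × τ → M) (r : κ →₀ ℕ) :
    Module.finrank K (degSpan K b v r) =
      ∑ i, ((degLE b r).filter fun e => (e, r - e.mapDomain b) ∉ reducibleSet K b o v i).card := by
  have h_index : {w : (σ →₀ ℕ) × τ | w.1.mapDomain b ≤ r} =
      (degLE b r ×ˢ (Finset.univ : Finset τ) : Finset _) := by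
    ext w
    simp
  rw [degSpan, h_index, finrank_span_image_eq_card (termKey_injective o), Finset.card_filter,
    Finset.sum_product_right]
  refine Finset.sum_congr rfl fun i _ => ?_
  rw [Finset.card_filter]
  refine Finset.sum_congr rfl fun e he => ?_
  simp [reducibleSet, initSpan, add_tsub_cancel_of_le (mem_degLE.1 he)]

theorem HasLeadingTerms.exists_hilbertPoly [Finite σ] [Finite κ] [Finite τ] {b : σ → κ}
    {o : MonomialOrder σ} {v : (σ →₀ ℕ) × τ → M} (hv : HasLeadingTerms K b o v) :
    ∃ φ : MvPolynomial κ ℚ, (∀ j, φ.degreeOf j ≤ Nat.card {s // b s = j}) ∧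
      ∃ r₀ : κ →₀ ℕ, ∀ r ≥ r₀, eval (fun j => (r j : ℚ)) φ =
        Module.finrank K (degSpan K b v r) := by
  classical
  have := Fintype.ofFinite τ
  choose φ hφ r₀ hr₀ using fun i =>
    exists_hilbertPoly_card_filter_notMem b (hv.isUpperSet_reducibleSet i)
  refine ⟨∑ i, φ i, fun j => (degreeOf_sum_le _ _ _).trans (Finset.sup_le fun i _ => hφ i j),
    ∑ i, r₀ i, fun r hr => ?_⟩
  rw [finrank_degSpan b o, map_sum, Nat.cast_sum]
  exact Finset.sum_congr rfl fun i _ =>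
    hr₀ i r (le_trans (Finset.single_le_sum_of_canonicallyOrdered (Finset.mem_univ i)) hr)

end LeadingTerms

/-! ### Normal ordering and the induced filtration -/

section CommutingFamily

variable {K A σ : Type*} [CommSemiring K] [Semiring A] [Algebra K A]

open scoped IsMulCommutative in
/-- Evaluation of commutative polynomials at a commuting family in a noncommutative algebra. -/
noncomputable def aevalOfCommute (f : σ → A) (hf : ∀ s t, Commute (f s) (f t)) :
    MvPolynomial σ K →ₐ[K] A :=
  have : IsMulCommutative (Algebra.adjoin K (Set.range f)) :=
    Algebra.isMulCommutative_adjoin K (by rintro _ ⟨s, rfl⟩ _ ⟨t, rfl⟩; exact hf s t)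
  (Algebra.adjoin K (Set.range f)).val.comp
    (aeval fun s =>
      ⟨f s, Algebra.subset_adjoin (Set.mem_range_self s)⟩)

theorem aevalOfCommute_X (f : σ → A) (hf : ∀ s t, Commute (f s) (f t)) (s : σ) :
    aevalOfCommute (K := K) f hf (X s) = f s := by
  simp [aevalOfCommute]

end CommutingFamily

/-- Two families in a noncommutative ring satisfying the defining relations of the Weyl algebra:
the `x i` commute, the `d i` commute, and `d i * x j - x j * d i` is the Kronecker delta. -/
structure IsWeylPair {ι A : Type*} [DecidableEq ι] [Ring A] (x d : ι → A) : Prop where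
  commute_x : ∀ i j, Commute (x i) (x j)
  commute_d : ∀ i j, Commute (d i) (d j)
  d_mul_x : ∀ i j, d i * x j = x j * d i + (Pi.single i 1 : ι → A) j

namespace IsWeylPair

section NormalOrder

variable {K A ι : Type*} [DecidableEq ι] [CommRing K] [Ring A] [Algebra K A] {x d : ι → A}

/-- The normally ordered element of `A` attached to a commutative polynomial: in every monomial the
variables `inl i` become factors `x i` on the left, the variables `inr i` factors `d i` on the
right. -/
noncomputable def normalOrder (h : IsWeylPair x d) : MvPolynomial (ι ⊕ ι) K →ₗ[K] A :=
  (LinearMap.applyₗ 1).comp (aevalOfCommute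
    (Sum.elim (fun i => LinearMap.mulLeft K (x i)) fun i => LinearMap.mulRight K (d i)) <| by
      rintro (i | i) (j | j)
      · exact (h.commute_x i j).map (Algebra.lmul K A)
      · exact LinearMap.commute_mulLeft_right _ _
      · exact (LinearMap.commute_mulLeft_right _ _).symm
      · ext
        simp [mul_assoc, (h.commute_d i j).eq]).toLinearMap

theorem normalOrder_one (h : IsWeylPair x d) : h.normalOrder (1 : MvPolynomial (ι ⊕ ι) K) = 1 := by
  simp [normalOrder]

theorem normalOrder_X_inl_mul (h : IsWeylPair x d) (i : ι) (v : MvPolynomial (ι ⊕ ι) K) :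
    h.normalOrder (X (Sum.inl i) * v) = x i * h.normalOrder v := by
  simp [normalOrder, aevalOfCommute_X]

theorem normalOrder_X_inr_mul (h : IsWeylPair x d) (i : ι) (v : MvPolynomial (ι ⊕ ι) K) :
    h.normalOrder (X (Sum.inr i) * v) = h.normalOrder v * d i := by
  simp [normalOrder, aevalOfCommute_X]

theorem normalOrder_rename_mul_rename (h : IsWeylPair x d) (v w : MvPolynomial ι K) :
    h.normalOrder (rename Sum.inl v * rename Sum.inr w) =
      aevalOfCommute x h.commute_x v * aevalOfCommute d h.commute_d w := by
  induction v using MvPolynomial.induction_on with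
  | C c =>
    induction w using MvPolynomial.induction_on with
    | C c' =>
      simp [← algebraMap_eq, Algebra.algebraMap_eq_smul_one, normalOrder_one]
    | add w w' hw hw' => simp only [map_add, mul_add, hw, hw']
    | mul_X w i hw =>
      rw [map_mul (rename _), rename_X, mul_comm _ (X _), mul_left_comm, normalOrder_X_inr_mul, hw,
        map_mul (aevalOfCommute d _), aevalOfCommute_X, mul_assoc]
  | add v v' hv hv' => simp only [map_add, add_mul, hv, hv']
  | mul_X v i hv =>
    rw [mul_comm v, map_mul (rename _), rename_X, mul_assoc, normalOrder_X_inl_mul, hv,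
      map_mul (aevalOfCommute x _), aevalOfCommute_X, mul_assoc]

theorem normalOrder_pderiv_inl (h : IsWeylPair x d) (i : ι) (v : MvPolynomial (ι ⊕ ι) K) :
    h.normalOrder (pderiv (Sum.inl i) v) = d i * h.normalOrder v - h.normalOrder v * d i := by
  induction v using MvPolynomial.induction_on with
  | C c => simp [← algebraMap_eq, Algebra.algebraMap_eq_smul_one, normalOrder_one]
  | add v w hv hw =>
    rw [map_add, map_add, hv, hw, map_add]
    noncomm_ring
  | mul_X v s hv =>
    rw [Derivation.leibniz, pderiv_X, mul_comm v]
    rcases s with j | j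
    · rw [normalOrder_X_inl_mul, ← mul_assoc, h.d_mul_x, smul_eq_mul, smul_eq_mul, map_add,
        normalOrder_X_inl_mul, hv]
      rcases eq_or_ne i j with rfl | hij
      · rw [Pi.single_eq_same, Pi.single_eq_same, mul_one]
        noncomm_ring
      · have hs : Sum.inl (β := ι) j ≠ Sum.inl i := fun hs ↦ hij (Sum.inl_injective hs).symm
        rw [Pi.single_eq_of_ne hs, Pi.single_eq_of_ne hij.symm, mul_zero, map_zero]
        noncomm_ring
    · simp [normalOrder_X_inr_mul, hv, mul_assoc, sub_mul, (h.commute_d i j).eq]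

theorem normalOrder_pderiv_inr (h : IsWeylPair x d) (i : ι) (v : MvPolynomial (ι ⊕ ι) K) :
    h.normalOrder (pderiv (Sum.inr i) v) = h.normalOrder v * x i - x i * h.normalOrder v := by
  induction v using MvPolynomial.induction_on with
  | C c => simp [← algebraMap_eq, Algebra.algebraMap_eq_smul_one, normalOrder_one]
  | add v w hv hw =>
    rw [map_add, map_add, hv, hw, map_add]
    noncomm_ring
  | mul_X v s hv =>
    rw [Derivation.leibniz, pderiv_X, mul_comm v]
    rcases s with j | j
    · simp [normalOrder_X_inl_mul, hv, ← mul_assoc, mul_sub, (h.commute_x i j).eq]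
    · rw [normalOrder_X_inr_mul, mul_assoc, h.d_mul_x, smul_eq_mul, smul_eq_mul, map_add,
        normalOrder_X_inr_mul, hv]
      rcases eq_or_ne i j with rfl | hij
      · rw [Pi.single_eq_same, Pi.single_eq_same, mul_one]
        noncomm_ring
      · have hs : Sum.inr (α := ι) j ≠ Sum.inr i := fun hs ↦ hij (Sum.inr_injective hs).symm
        rw [Pi.single_eq_of_ne hs, Pi.single_eq_of_ne hij, mul_zero, map_zero]
        noncomm_ring

theorem normalOrder_monomial_add_single_inl (h : IsWeylPair x d) (e : ι ⊕ ι →₀ ℕ) (i : ι) :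
    h.normalOrder (monomial (e + Finsupp.single (Sum.inl i) 1) (1 : K)) =
      x i * h.normalOrder (monomial e (1 : K)) := by
  rw [← normalOrder_X_inl_mul, mul_comm, monomial_add_single, pow_one]

theorem normalOrder_monomial_add_single_inr (h : IsWeylPair x d) (e : ι ⊕ ι →₀ ℕ) (i : ι) :
    h.normalOrder (monomial (e + Finsupp.single (Sum.inr i) 1) (1 : K)) =
      h.normalOrder (monomial e (1 : K)) * d i := by
  rw [← normalOrder_X_inr_mul, mul_comm, monomial_add_single, pow_one]

theorem d_mul_normalOrder_monomial (h : IsWeylPair x d) (e : ι ⊕ ι →₀ ℕ) (i : ι) :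
    d i * h.normalOrder (monomial e (1 : K)) =
      h.normalOrder (monomial (e + Finsupp.single (Sum.inr i) 1) (1 : K)) +
      (e (Sum.inl i) : K) •
        h.normalOrder (monomial (e - Finsupp.single (Sum.inl i) 1) (1 : K)) := by
  rw [normalOrder_monomial_add_single_inr, ← map_smul, smul_monomial, smul_eq_mul, mul_one,
    ← sub_eq_iff_eq_add', ← normalOrder_pderiv_inl, pderiv_monomial, one_mul]

end NormalOrder

section Filtration

variable {K A M ι κ τ : Type*} [Field K] [Ring A] [Algebra K A] [AddCommGroup M]
  [Module A M] [DecidableEq ι] {x d : ι → A}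

variable (K) in
/-- The translates `x^α d^β • g i` of a family of module elements, with `(α, β)` encoded as an
exponent on `ι ⊕ ι`. -/
noncomputable def translates (h : IsWeylPair x d) (g : τ → M) (w : (ι ⊕ ι →₀ ℕ) × τ) : M :=
  h.normalOrder (monomial w.1 (1 : K)) • g w.2

theorem x_smul_translates (h : IsWeylPair x d) (g : τ → M) (e : ι ⊕ ι →₀ ℕ) (t : τ) (i : ι) :
    x i • h.translates K g (e, t) = h.translates K g (e + Finsupp.single (Sum.inl i) 1, t) := by
  rw [translates, translates, normalOrder_monomial_add_single_inl, mul_smul]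

variable [Module K M]

variable (K) in
/-- The filtration `∑ i, W_r • g i` of a module over a Weyl algebra, where the block map `B` gives
both `x i` and `d i` the multidegree of the unit vector at `B i`. -/
noncomputable def filtration (h : IsWeylPair x d) (B : ι → κ) (g : τ → M) (r : κ →₀ ℕ) :
    Submodule K M :=
  degSpan K (Sum.elim B B) (h.translates K g) r

instance [Finite ι] [Finite τ] (h : IsWeylPair x d) (B : ι → κ) (g : τ → M) (r : κ →₀ ℕ) :
    FiniteDimensional K (h.filtration K B g r) :=
  inferInstanceAs (FiniteDimensional K (degSpan K _ _ r))

theorem filtration_mono (h : IsWeylPair x d) (B : ι → κ) (g : τ → M) :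
    Monotone (h.filtration K B g) :=
  degSpan_mono _ _

variable [IsScalarTower K A M]

theorem filtration_eq_span_smul (h : IsWeylPair x d) (B : ι → κ) (g : τ → M) (r : κ →₀ ℕ) :
    h.filtration K B g r = Submodule.span K {y | ∃ t, ∃ D ∈ Submodule.span K
      ((fun e => h.normalOrder (monomial e (1 : K))) '' {e | e.mapDomain (Sum.elim B B) ≤ r}),
      y = D • g t} := by
  refine le_antisymm (Submodule.span_le.2 ?_) (Submodule.span_le.2 ?_)
  · rintro _ ⟨⟨e, t⟩, he, rfl⟩
    exact Submodule.subset_span ⟨t, _, Submodule.subset_span ⟨e, he, rfl⟩, rfl⟩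
  · rintro _ ⟨t, D, hD, rfl⟩
    suffices Submodule.span K _ ≤ (h.filtration K B g r).comap
      ((LinearMap.toSpanSingleton A M (g t)).restrictScalars K) from this hD
    refine Submodule.span_le.2 ?_
    rintro _ ⟨e, he, rfl⟩
    exact mem_degSpan (h.translates K g) (w := (e, t)) he

theorem d_smul_translates (h : IsWeylPair x d) (g : τ → M) (e : ι ⊕ ι →₀ ℕ) (t : τ) (i : ι) :
    d i • h.translates K g (e, t) = h.translates K g (e + Finsupp.single (Sum.inr i) 1, t) +
      (e (Sum.inl i) : K) • h.translates K g (e - Finsupp.single (Sum.inl i) 1, t) := by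
  simp only [translates]
  rw [← mul_smul, d_mul_normalOrder_monomial, add_smul, smul_assoc]

theorem smul_translates_sub_mem_initSpan [LinearOrder τ] (h : IsWeylPair x d) (B : ι → κ)
    (o : MonomialOrder (ι ⊕ ι)) (g : τ → M) (e : ι ⊕ ι →₀ ℕ) (t : τ) (s : ι ⊕ ι) :
    Sum.elim x d s • h.translates K g (e, t) - h.translates K g (e + Finsupp.single s 1, t) ∈
      initSpan K (Sum.elim B B) o (h.translates K g)
        ((e + Finsupp.single s 1).mapDomain (Sum.elim B B)) (e + Finsupp.single s 1, t) := by
  rcases s with i | i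
  · rw [Sum.elim_inl, x_smul_translates, sub_self]
    exact zero_mem _
  · rw [Sum.elim_inr, d_smul_translates, add_sub_cancel_left]
    have hlt : e - Finsupp.single (Sum.inl i) 1 < e + Finsupp.single (Sum.inr i) 1 :=
      tsub_le_self.trans_lt (lt_add_of_pos_right e (pos_of_ne_zero (by simp)))
    exact Submodule.smul_mem _ _ (mem_initSpan _ (Finsupp.mapDomain_mono hlt.le)
      (termKey_lt_termKey_of_lt o hlt t t))

theorem hasLeadingTerms_translates [LinearOrder τ] (h : IsWeylPair x d) (B : ι → κ)
    (o : MonomialOrder (ι ⊕ ι)) (g : τ → M) :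
    HasLeadingTerms K (Sum.elim B B) o (h.translates K g) := fun s =>
  ⟨Algebra.lsmul K K M (Sum.elim x d s), fun e t =>
    h.smul_translates_sub_mem_initSpan B o g e t s⟩

theorem exists_hilbertPoly [Finite ι] [Finite κ] [Finite τ] (h : IsWeylPair x d) (B : ι → κ)
    (g : τ → M) :
    ∃ φ : MvPolynomial κ ℚ, (∀ j, φ.degreeOf j ≤ 2 * Nat.card {i // B i = j}) ∧
      ∃ r₀ : κ →₀ ℕ, ∀ r ≥ r₀, eval (fun j => (r j : ℚ)) φ =
        Module.finrank K (h.filtration K B g r) := by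
  classical
  let : LinearOrder τ := linearOrderOfSTO WellOrderingRel
  let : LinearOrder (ι ⊕ ι) := linearOrderOfSTO WellOrderingRel
  have card_fiber (j : κ) : Nat.card {s // Sum.elim B B s = j} = 2 * Nat.card {i // B i = j} := by
    rw [Nat.card_congr Equiv.subtypeSum, Nat.card_sum, two_mul]
    rfl
  obtain ⟨φ, hφ, h_eval⟩ :=
    (h.hasLeadingTerms_translates (K := K) B MonomialOrder.lex g).exists_hilbertPoly
  exact ⟨φ, fun j => card_fiber j ▸ hφ j, h_eval⟩

end Filtration

end IsWeylPair

/-! ### The lower bound for the degrees -/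

section Growth

variable {R σ κ : Type*}

theorem natDegree_aeval_line_le [CommSemiring R] (φ : MvPolynomial κ R) (s w : κ → R)
    {J : Finset κ} (hw : ∀ j ∉ J, w j = 0) {D : ℕ} (hD : ∀ e ∈ φ.support, ∑ j ∈ J, e j ≤ D) :
    (aeval (fun j => Polynomial.C (s j) + Polynomial.C (w j) * Polynomial.X) φ).natDegree ≤ D := by
  classical
  have natDegree_line (j : κ) :
      (Polynomial.C (s j) + Polynomial.C (w j) * Polynomial.X).natDegree ≤
        if j ∈ J then 1 else 0 := by
    split_ifs with hj
    · rw [add_comm]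
      exact Polynomial.natDegree_linear_le
    · rw [hw j hj, Polynomial.C_0, zero_mul, add_zero, Polynomial.natDegree_C]
  rw [aeval_def, eval₂_eq]
  refine Polynomial.natDegree_sum_le_of_forall_le _ _ fun e he => (?_ : _ ≤ _).trans (hD e he)
  calc Polynomial.natDegree (_ * ∏ j ∈ e.support, _ ^ e j)
    _ ≤ ∑ j ∈ e.support, e j * if j ∈ J then 1 else 0 :=
      (Polynomial.natDegree_C_mul_le _ _).trans <| (Polynomial.natDegree_prod_le _ _).trans <|
        Finset.sum_le_sum fun j _ => Polynomial.natDegree_pow_le_of_le _ (natDegree_line j)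
    _ = ∑ j ∈ e.support with j ∈ J, e j := by
      simp only [mul_ite, mul_one, mul_zero, Finset.sum_filter]
    _ ≤ ∑ j ∈ J, e j :=
      Finset.sum_le_sum_of_subset fun j hj => (Finset.mem_filter.1 hj).2

theorem le_natDegree_of_pow_le_eval {Q : Polynomial ℚ} {N : ℕ}
    (h : ∀ c : ℕ, (c : ℚ) ^ N ≤ Q.eval (c : ℚ)) : N ≤ Q.natDegree := by
  by_contra! hlt
  have hdeg : Q.degree < (Polynomial.X ^ N : Polynomial ℚ).degree := by
    rw [Polynomial.degree_X_pow]
    exact Polynomial.degree_le_natDegree.trans_lt (Nat.cast_lt.2 hlt)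
  have ratio_tendsto := (Polynomial.div_tendsto_atTop_zero_of_degree_lt Q _ hdeg).comp
    (tendsto_natCast_atTop_atTop (R := ℚ))
  obtain ⟨c, hc, hc0⟩ := ((ratio_tendsto.eventually (gt_mem_nhds zero_lt_one)).and
    (Filter.eventually_gt_atTop 0)).exists
  simp only [Function.comp_apply, Polynomial.eval_pow, Polynomial.eval_X] at hc
  rw [div_lt_one (pow_pos (Nat.cast_pos.2 hc0) N)] at hc
  exact (h c).not_gt hc

theorem pow_card_le_card_degLE [Finite σ] (b : σ → κ) (S : Finset σ) (c : ℕ) :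
    c ^ S.card ≤ (degLE b (c • (Finsupp.indicator S fun _ _ => 1).mapDomain b)).card := by
  classical
  have := Fintype.ofFinite σ
  let u : σ →₀ ℕ := Finsupp.indicator S fun _ _ => 1
  have smul_u_apply : ∀ i ∈ S, (c • u) i = c := fun i hi => by simp [u, hi]
  have support_subset : (c • u).support ⊆ S :=
    Finsupp.support_smul.trans (Finsupp.support_indicator_subset _ _)
  calc c ^ S.card
    _ ≤ (c + 1) ^ S.card := Nat.pow_le_pow_left c.le_succ _
    _ = ∏ i ∈ S, (Finset.Iic ((c • u) i)).card := by
      rw [Finset.prod_congr rfl fun i hi => by rw [smul_u_apply i hi, Nat.card_Iic],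
        Finset.prod_const]
    _ = (Finset.Iic (c • u)).card := by
      rw [Finsupp.card_Iic]
      refine (Finset.prod_subset support_subset fun i _ hi => ?_).symm
      rw [Finsupp.notMem_support_iff.1 hi, Nat.card_Iic, zero_add]
    _ ≤ _ := by
      rw [← Finsupp.mapDomain_smul]
      exact Finset.card_le_card (Iic_subset_degLE b _)

theorem card_le_two_mul_of_card_degLE_le [Finite σ] {b : σ → κ} {φ : MvPolynomial κ ℚ}
    {s : κ →₀ ℕ} (h : ∀ a, ((degLE b a).card : ℚ) ≤
      eval (fun j => ((s + a) j : ℚ)) φ * eval (fun j => ((s + 2 • a) j : ℚ)) φ)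
    {S : Finset σ} {J : Finset κ} (hS : ∀ i ∈ S, b i ∈ J) {D : ℕ}
    (hD : ∀ e ∈ φ.support, ∑ j ∈ J, e j ≤ D) : S.card ≤ 2 * D := by
  let w : κ →₀ ℕ := (Finsupp.indicator S fun _ _ => 1).mapDomain b
  let q : Polynomial ℚ :=
    aeval (fun j => Polynomial.C (s j : ℚ) + Polynomial.C (w j : ℚ) * Polynomial.X) φ
  have eval_q (c : ℕ) : q.eval (c : ℚ) = eval (fun j => ((s + c • w) j : ℚ)) φ := by
    change Polynomial.aeval (c : ℚ) (aeval _ φ) = aeval _ φ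
    rw [← AlgHom.comp_apply, comp_aeval]
    simp [mul_comm]
  have natDegree_q : q.natDegree ≤ D := by
    refine natDegree_aeval_line_le φ _ _ (fun j hj => ?_) hD
    refine Nat.cast_eq_zero.2 (Finsupp.notMem_support_iff.1 fun hjw => hj ?_)
    classical
    obtain ⟨i, hi, rfl⟩ := Finset.mem_image.1 (Finsupp.mapDomain_support hjw)
    exact hS i (Finsupp.support_indicator_subset _ _ hi)
  let Q : Polynomial ℚ := q * q.comp (Polynomial.C 2 * Polynomial.X)
  have natDegree_Q : Q.natDegree ≤ 2 * D := by
    have : (q.comp (Polynomial.C 2 * Polynomial.X)).natDegree ≤ D := by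
      simpa [Polynomial.natDegree_comp] using natDegree_q
    exact Polynomial.natDegree_mul_le.trans (by lia)
  refine le_trans (le_natDegree_of_pow_le_eval fun c => ?_) natDegree_Q
  calc (c : ℚ) ^ S.card
    _ ≤ (degLE b (c • w)).card := mod_cast pow_card_le_card_degLE b S c
    _ ≤ q.eval (c : ℚ) * q.eval ((2 * c : ℕ) : ℚ) := by
      rw [eval_q, eval_q, mul_smul]
      exact h (c • w)
    _ = Q.eval (c : ℚ) := by
      simp [Q]

end Growth

section PartialDerivative

variable {R σ κ : Type*} [CommSemiring R]

theorem add_single_mem_support_of_mem_support_pderiv {v : MvPolynomial σ R} {s : σ} {e : σ →₀ ℕ}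
    (he : e ∈ (pderiv s v).support) : e + Finsupp.single s 1 ∈ v.support := by
  rw [mem_support_iff, coeff_pderiv] at he
  exact mem_support_iff.2 (left_ne_zero_of_mul he)

theorem exists_pderiv_ne_zero [NoZeroDivisors R] [CharZero R] {v : MvPolynomial σ R}
    (hv : v.totalDegree ≠ 0) : ∃ s, pderiv s v ≠ 0 := by
  rw [Ne, totalDegree_eq_zero_iff] at hv
  push Not at hv
  obtain ⟨e, he, s, hs⟩ := hv
  have h_sub_add : e - Finsupp.single s 1 + Finsupp.single s 1 = e :=
    tsub_add_cancel_of_le (Finsupp.single_le_iff.2 (Nat.one_le_iff_ne_zero.2 hs))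
  refine ⟨s, fun h => ?_⟩
  have := congrArg (coeff (e - Finsupp.single s 1)) h
  rw [coeff_pderiv, h_sub_add, coeff_zero] at this
  exact mul_ne_zero (mem_support_iff.1 he) (Nat.cast_add_one_ne_zero _) this

theorem pderiv_mem_restrictSupport_degLE [Finite σ] {b : σ → κ} {a : κ →₀ ℕ} {s : σ}
    {v : MvPolynomial σ R}
    (hv : v ∈ restrictSupport R (degLE b (a + Finsupp.single (b s) 1))) :
    pderiv s v ∈ restrictSupport R (degLE b a) := by
  intro e he
  have := mem_degLE.1 (hv (add_single_mem_support_of_mem_support_pderiv he))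
  rw [Finsupp.mapDomain_add, Finsupp.mapDomain_single] at this
  exact mem_degLE.2 (le_of_add_le_add_right this)

theorem exists_eq_add_single_of_pderiv_ne_zero [Finite σ] {b : σ → κ} {a : κ →₀ ℕ} {s : σ}
    {v : MvPolynomial σ R} (hv : v ∈ restrictSupport R (degLE b a)) (hs : pderiv s v ≠ 0) :
    ∃ a', a = a' + Finsupp.single (b s) 1 := by
  obtain ⟨e, he⟩ := support_nonempty.2 hs
  have := mem_degLE.1 (hv (add_single_mem_support_of_mem_support_pderiv he))
  rw [Finsupp.mapDomain_add, Finsupp.mapDomain_single] at this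
  exact exists_add_of_le (le_add_self.trans this) |>.imp fun _ h => h.trans (add_comm _ _)

end PartialDerivative

namespace IsWeylPair

section LowerBound

variable {K A M ι κ τ : Type*} [Field K] [Ring A] [Algebra K A] [AddCommGroup M] [Module K M]
  [Module A M] [IsScalarTower K A M] [DecidableEq ι] {x d : ι → A} {B : ι → κ} {g : τ → M}

theorem smul_mem_filtration (h : IsWeylPair x d) {r : κ →₀ ℕ} {y : M}
    (hy : y ∈ h.filtration K B g r) (s : ι ⊕ ι) :
    Sum.elim x d s • y ∈
      h.filtration K B g (r + Finsupp.single (Sum.elim B B s) 1) := by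
  suffices h.filtration K B g r ≤ (h.filtration K B g (r + Finsupp.single (Sum.elim B B s) 1)).comap
    (Algebra.lsmul K K M (Sum.elim x d s)) from this hy
  refine Submodule.span_le.2 ?_
  rintro _ ⟨⟨e, t⟩, he, rfl⟩
  have translate_mem : h.translates K g (e + Finsupp.single s 1, t) ∈
      h.filtration K B g (r + Finsupp.single (Sum.elim B B s) 1) := by
    refine mem_degSpan _ ?_
    rw [Finsupp.mapDomain_add, Finsupp.mapDomain_single]
    exact add_le_add_left he _
  change Sum.elim x d s • h.translates K g (e, t) ∈ h.filtration K B g _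
  rcases s with i | i
  · rwa [Sum.elim_inl x, x_smul_translates]
  · rw [Sum.elim_inr x, d_smul_translates]
    exact add_mem translate_mem <| Submodule.smul_mem _ _ <| mem_degSpan _ <|
      ((Finsupp.mapDomain_mono tsub_le_self).trans he).trans le_self_add

theorem normalOrder_monomial_smul_mem_filtration (h : IsWeylPair x d) (e : ι ⊕ ι →₀ ℕ)
    {r : κ →₀ ℕ} {y : M} (hy : y ∈ h.filtration K B g r) :
    h.normalOrder (monomial e (1 : K)) • y ∈
      h.filtration K B g (e.mapDomain (Sum.elim B B) + r) := by
  induction e using induction_add_single generalizing r y with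
  | zero => simpa [normalOrder_one] using hy
  | add_single e s ih =>
    rw [Finsupp.mapDomain_add, Finsupp.mapDomain_single]
    rcases s with i | i
    · rw [normalOrder_monomial_add_single_inl, mul_smul, add_right_comm]
      exact h.smul_mem_filtration (ih hy) (Sum.inl i)
    · rw [normalOrder_monomial_add_single_inr, mul_smul, add_assoc, add_comm (Finsupp.single _ _)]
      exact ih (h.smul_mem_filtration hy (Sum.inr i))

theorem normalOrder_smul_mem_filtration [Finite ι] (h : IsWeylPair x d) {a r : κ →₀ ℕ}
    {v : MvPolynomial (ι ⊕ ι) K} (hv : v ∈ restrictSupport K (degLE (Sum.elim B B) a)) {y : M}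
    (hy : y ∈ h.filtration K B g r) :
    h.normalOrder v • y ∈ h.filtration K B g (a + r) := by
  rw [restrictSupport_eq_span] at hv
  induction hv using Submodule.span_induction with
  | mem v hv =>
    obtain ⟨e, he, rfl⟩ := hv
    exact h.filtration_mono B g (add_le_add_left (mem_degLE.1 he) r)
      (h.normalOrder_monomial_smul_mem_filtration e hy)
  | zero => simp
  | add v w _ _ hv hw => simpa [add_smul] using add_mem hv hw
  | smul c v _ hv => simpa using Submodule.smul_mem _ c hv

theorem normalOrder_pderiv_smul_eq_zero (h : IsWeylPair x d) {r : κ →₀ ℕ}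
    {v : MvPolynomial (ι ⊕ ι) K} {s : ι ⊕ ι}
    (hv : ∀ y ∈ h.filtration K B g (r + Finsupp.single (Sum.elim B B s) 1),
      h.normalOrder v • y = 0) :
    ∀ y ∈ h.filtration K B g r, h.normalOrder (pderiv s v) • y = 0 := by
  intro y hy
  have smul_y : h.normalOrder v • y = 0 := hv y (h.filtration_mono B g le_self_add hy)
  have smul_gen_smul_y : h.normalOrder v • Sum.elim x d s.swap • y = 0 := by
    refine hv _ ?_
    convert h.smul_mem_filtration hy s.swap using 3
    cases s <;> rfl
  rcases s with i | i
  · simp only [Sum.swap_inl, Sum.elim_inr] at smul_gen_smul_y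
    rw [normalOrder_pderiv_inl, sub_smul, mul_smul, mul_smul, smul_y, smul_gen_smul_y, smul_zero,
      sub_zero]
  · simp only [Sum.swap_inr, Sum.elim_inl] at smul_gen_smul_y
    rw [normalOrder_pderiv_inr, sub_smul, mul_smul, mul_smul, smul_y, smul_gen_smul_y, smul_zero,
      sub_zero]

theorem filtration_eq_bot_of_normalOrder_smul_eq_zero [CharZero K] [Finite ι] (h : IsWeylPair x d)
    {a s : κ →₀ ℕ} {v : MvPolynomial (ι ⊕ ι) K} (hv0 : v ≠ 0)
    (hv : v ∈ restrictSupport K (degLE (Sum.elim B B) a))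
    (hkill : ∀ y ∈ h.filtration K B g (a + s), h.normalOrder v • y = 0) :
    h.filtration K B g s = ⊥ := by
  induction a using WellFoundedLT.induction generalizing v with
  | ind a ih =>
  by_cases hdeg : v.totalDegree = 0
  · obtain ⟨c, rfl⟩ : ∃ c, v = C c := ⟨_, totalDegree_eq_zero_iff_eq_C.1 hdeg⟩
    have hc : c ≠ 0 := by
      rintro rfl
      exact hv0 C_0
    have normalOrder_C : h.normalOrder (C c) = c • 1 := by
      rw [← mul_one (C c), ← smul_eq_C_mul, map_smul, normalOrder_one]
    refine (Submodule.eq_bot_iff _).2 fun y hy => ?_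
    have := hkill y (h.filtration_mono B g le_add_self hy)
    rw [normalOrder_C, smul_assoc, one_smul] at this
    exact (smul_eq_zero.1 this).resolve_left hc
  · obtain ⟨t, ht⟩ := exists_pderiv_ne_zero hdeg
    obtain ⟨a, rfl⟩ := exists_eq_add_single_of_pderiv_ne_zero hv ht
    refine ih a (lt_add_of_pos_right a (pos_of_ne_zero (by simp))) ht
      (pderiv_mem_restrictSupport_degLE hv) (h.normalOrder_pderiv_smul_eq_zero fun y hy => ?_)
    exact hkill y (by rwa [add_right_comm])

theorem card_degLE_le_finrank_mul_finrank [CharZero K] [Finite ι] [Finite τ] (h : IsWeylPair x d)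
    {s : κ →₀ ℕ} (hs : h.filtration K B g s ≠ ⊥) (a : κ →₀ ℕ) :
    (degLE (Sum.elim B B) a).card ≤ Module.finrank K (h.filtration K B g (a + s)) *
      Module.finrank K (h.filtration K B g (a + (a + s))) := by
  let P := restrictSupport K (degLE (Sum.elim B B) a : Set (ι ⊕ ι →₀ ℕ))
  have smul_mem (v : P) : ∀ y ∈ h.filtration K B g (a + s),
      Algebra.lsmul K K M (h.normalOrder v.1) y ∈ h.filtration K B g (a + (a + s)) :=
    fun y hy => h.normalOrder_smul_mem_filtration v.2 hy
  let act : P →ₗ[K] h.filtration K B g (a + s) →ₗ[K] h.filtration K B g (a + (a + s)) :=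
    { toFun v := (Algebra.lsmul K K M (h.normalOrder v.1)).restrict (smul_mem v)
      map_add' v w := by
        ext y
        simp
      map_smul' c v := by
        ext y
        simp }
  have act_injective : Function.Injective act := by
    refine (injective_iff_map_eq_zero act).2 fun v hv => ?_
    by_contra hv0
    refine hs (h.filtration_eq_bot_of_normalOrder_smul_eq_zero (Submodule.coe_eq_zero.not.2 hv0) v.2
      fun y hy => ?_)
    exact congrArg Subtype.val (LinearMap.congr_fun hv ⟨y, hy⟩)
  have := LinearMap.finrank_le_finrank_of_injective act_injective
  rwa [Module.finrank_linearMap, Module.finrank_eq_nat_card_basis (basisRestrictSupport K _),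
    Nat.card_coe_set_eq, Set.ncard_coe_finset] at this

end LowerBound

end IsWeylPair

namespace IsWeylPair

section HilbertPolynomial

variable {K A M ι κ τ : Type*} [Field K] [Ring A] [Algebra K A] [AddCommGroup M] [Module K M]
  [Module A M] [DecidableEq ι] {x d : ι → A} {B : ι → κ} {g : τ → M}

theorem filtration_ne_bot (h : IsWeylPair x d) (B : ι → κ) (hg : g ≠ 0) (s : κ →₀ ℕ) :
    h.filtration K B g s ≠ ⊥ := by
  obtain ⟨t, ht⟩ := Function.ne_iff.1 hg
  have translate_eq : h.translates K g (0, t) = g t := by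
    rw [translates, monomial_zero', C_1, normalOrder_one, one_smul]
  refine (Submodule.ne_bot_iff _).2 ⟨g t, translate_eq ▸ mem_degSpan _ ?_, ht⟩
  rw [Finsupp.mapDomain_zero]
  exact zero_le

theorem card_le_of_eval_eq_finrank [CharZero K] [IsScalarTower K A M] [Finite ι] [Finite τ]
    (h : IsWeylPair x d) (hg : g ≠ 0) {φ : MvPolynomial κ ℚ} {s : κ →₀ ℕ}
    (hφ : ∀ r ≥ s, eval (fun j => (r j : ℚ)) φ = Module.finrank K (h.filtration K B g r))
    {I : Finset ι} {J : Finset κ} (hI : ∀ i ∈ I, B i ∈ J) {D : ℕ}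
    (hD : ∀ e ∈ φ.support, ∑ j ∈ J, e j ≤ D) : I.card ≤ D := by
  have h_card (a : κ →₀ ℕ) : ((degLE (Sum.elim B B) a).card : ℚ) ≤
      eval (fun j => ((s + a) j : ℚ)) φ * eval (fun j => ((s + 2 • a) j : ℚ)) φ := by
    rw [hφ _ le_self_add, hφ _ le_self_add, ← add_comm a s,
      show s + 2 • a = a + (a + s) by abel]
    exact_mod_cast h.card_degLE_le_finrank_mul_finrank (h.filtration_ne_bot B hg s) a
  have := card_le_two_mul_of_card_degLE_le h_card (S := I.disjSum I)
    (by simpa [Finset.mem_disjSum, or_imp, forall_and] using hI) hD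
  rw [Finset.card_disjSum] at this
  lia

end HilbertPolynomial

end IsWeylPair

theorem totalDegree_le_sum_degreeOf {R κ : Type*} [CommSemiring R] [Fintype κ]
    (φ : MvPolynomial κ R) :
    φ.totalDegree ≤ ∑ j, φ.degreeOf j := by
  refine Finset.sup_le fun e he => ?_
  rw [Finsupp.sum_fintype _ _ fun _ => rfl]
  exact Finset.sum_le_sum fun j _ => le_degreeOf_of_mem_support j he

theorem statement_17_general {K A M ι κ τ : Type*} [Field K] [CharZero K] [Ring A] [Algebra K A]
    [AddCommGroup M] [Module K M] [Module A M] [IsScalarTower K A M] [DecidableEq ι] [Finite ι]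
    [Finite κ] [Finite τ] {x d : ι → A} (h : IsWeylPair x d) (B : ι → κ) {g : τ → M} (hg : g ≠ 0) :
    ∃ φ : MvPolynomial κ ℚ,
      (∃ s : κ →₀ ℕ, ∀ r ≥ s,
        eval (fun j => (r j : ℚ)) φ = Module.finrank K (h.filtration K B g r)) ∧
      (∀ j, Nat.card {i // B i = j} ≤ φ.degreeOf j ∧
        φ.degreeOf j ≤ 2 * Nat.card {i // B i = j}) ∧
      Nat.card ι ≤ φ.totalDegree ∧ φ.totalDegree ≤ 2 * Nat.card ι := by
  classical
  have := Fintype.ofFinite ι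
  have := Fintype.ofFinite κ
  obtain ⟨φ, degreeOf_le, s, hs⟩ := h.exists_hilbertPoly (K := K) B g
  refine ⟨φ, ⟨s, hs⟩, fun j => ⟨?_, degreeOf_le j⟩, ?_, ?_⟩
  · rw [Nat.card_eq_fintype_card, Fintype.card_subtype]
    refine h.card_le_of_eval_eq_finrank hg hs (J := {j}) (by simp) fun e he => ?_
    rw [Finset.sum_singleton]
    exact le_degreeOf_of_mem_support j he
  · rw [Nat.card_eq_fintype_card, ← Finset.card_univ]
    refine h.card_le_of_eval_eq_finrank hg hs (J := Finset.univ) (by simp) fun e he => ?_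
    have := le_totalDegree he
    rwa [Finsupp.sum_fintype _ _ fun _ => rfl] at this
  · calc φ.totalDegree ≤ ∑ j, φ.degreeOf j := totalDegree_le_sum_degreeOf φ
      _ ≤ ∑ j, 2 * Nat.card {i // B i = j} := Finset.sum_le_sum fun j _ => degreeOf_le j
      _ = 2 * Nat.card ι := by
        rw [← Finset.mul_sum, ← Nat.card_sigma, Nat.card_congr (Equiv.sigmaFiberEquiv B)]

/-! ### The Weyl algebra of polynomial differential operators -/

theorem pderiv_pderiv_comm {R σ : Type*} [CommRing R] (i j : σ) (v : MvPolynomial σ R) :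
    pderiv i (pderiv j v) = pderiv j (pderiv i v) := by
  classical
  have lie_eq_zero : ⁅pderiv (R := R) i, pderiv (R := R) j⁆ = 0 := by
    refine derivation_ext fun k => ?_
    rw [Derivation.commutator_apply, pderiv_X, pderiv_X, Pi.single_apply, Pi.single_apply]
    split_ifs <;> simp
  rw [← sub_eq_zero, ← Derivation.commutator_apply, lie_eq_zero, Derivation.zero_apply]

theorem isWeylPair_mulLeft_X_pderiv (K σ : Type*) [CommRing K] [DecidableEq σ] :
    IsWeylPair (fun i => (LinearMap.mulLeft K (X i) : Module.End K (MvPolynomial σ K)))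
      fun i => (pderiv i).toLinearMap where
  commute_x i j := LinearMap.ext fun v => mul_left_comm (X i) (X j) v
  commute_d i j := LinearMap.ext fun v => pderiv_pderiv_comm i j v
  d_mul_x i j := LinearMap.ext fun v => by
    by_cases hij : i = j <;> simp [pderiv_X, hij, add_comm]

theorem isWeylPair_wx_wd (n : ℕ) (K : Type) [Field K] : IsWeylPair (wx n K) (wd n K) where
  commute_x i j := Subtype.ext ((isWeylPair_mulLeft_X_pderiv K (Fin n)).commute_x i j)
  commute_d i j := Subtype.ext ((isWeylPair_mulLeft_X_pderiv K (Fin n)).commute_d i j)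
  d_mul_x i j := Subtype.ext <| ((isWeylPair_mulLeft_X_pderiv K (Fin n)).d_mul_x i j).trans <| by
    by_cases hij : i = j <;> simp [hij] <;> rfl

theorem wMono_eq_normalOrder (n : ℕ) (K : Type) [Field K] (e : Fin n ⊕ Fin n →₀ ℕ) :
    wMono n K (e ∘ Sum.inl) (e ∘ Sum.inr) =
      (isWeylPair_wx_wd n K).normalOrder (monomial e (1 : K)) := by
  have monomial_eq_rename : monomial e (1 : K) =
      rename Sum.inl ((List.finRange n).map fun i => X i ^ e (Sum.inl i)).prod *
      rename Sum.inr ((List.finRange n).map fun i => X i ^ e (Sum.inr i)).prod := by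
    rw [← Fin.prod_univ_def, ← Fin.prod_univ_def, monomial_eq, Finsupp.prod_fintype _ _ (by simp),
      Fintype.prod_sum_type]
    simp
  rw [monomial_eq_rename, IsWeylPair.normalOrder_rename_mul_rename]
  simp [map_list_prod, aevalOfCommute_X, Function.comp_def, wMono]

theorem ordBlk_eq_mapDomain {n p : ℕ} (B : Fin n → Fin p) (e : Fin n ⊕ Fin n →₀ ℕ) (j : Fin p) :
    ordBlk B (e ∘ Sum.inl) (e ∘ Sum.inr) j = e.mapDomain (Sum.elim B B) j := by
  rw [mapDomain_apply_eq_sum_fiber, ordBlk, Finset.sum_filter, Finset.sum_filter,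
    Fintype.sum_sum_type, ← Finset.sum_add_distrib]
  exact Finset.sum_congr rfl fun i _ => ite_add_zero

theorem bernWB_natCast {n p : ℕ} (K : Type) [Field K] (B : Fin n → Fin p) (r : Fin p →₀ ℕ) :
    bernWB n p K B (fun j => (r j : ℤ)) = Submodule.span K
      ((fun e => (isWeylPair_wx_wd n K).normalOrder (monomial e (1 : K))) ''
        {e | e.mapDomain (Sum.elim B B) ≤ r}) := by
  refine congrArg (Submodule.span K) (Set.ext fun D => ?_)
  constructor
  · rintro ⟨α, β, hαβ, rfl⟩
    obtain ⟨e, rfl, rfl⟩ : ∃ e : Fin n ⊕ Fin n →₀ ℕ, e ∘ Sum.inl = α ∧ e ∘ Sum.inr = β :=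
      ⟨Finsupp.equivFunOnFinite.symm (Sum.elim α β), rfl, rfl⟩
    refine ⟨e, fun j => ?_, (wMono_eq_normalOrder n K e).symm⟩
    exact ordBlk_eq_mapDomain B e j ▸ Nat.cast_le.1 (hαβ j)
  · rintro ⟨e, he, rfl⟩
    refine ⟨e ∘ Sum.inl, e ∘ Sum.inr, fun j => ?_, (wMono_eq_normalOrder n K e).symm⟩
    rw [ordBlk_eq_mapDomain]
    exact Nat.cast_le.2 (he j)

theorem ne_zero_of_span_range_eq_top {R M ι : Type*} [Semiring R] [AddCommMonoid M] [Module R M]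
    [Nontrivial M] {g : ι → M} (hg : Submodule.span R (Set.range g) = ⊤) : g ≠ 0 := by
  rintro rfl
  refine bot_ne_top ((Submodule.span_eq_bot.2 ?_).symm.trans hg)
  rintro _ ⟨i, rfl⟩
  rfl

section ModFilB

variable {n p m : ℕ} {K M : Type} [Field K] [AddCommGroup M] [Module K M]
  [Module (WeylAlg n K) M] [IsScalarTower K (WeylAlg n K) M]

theorem modFilB_natCast (B : Fin n → Fin p) (g : Fin m → M) (r : Fin p →₀ ℕ) :
    modFilB n p K B M m g (fun j => (r j : ℤ)) =
      (isWeylPair_wx_wd n K).filtration K B g r := by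
  rw [modFilB, bernWB_natCast, IsWeylPair.filtration_eq_span_smul]

theorem isNumerical_and_exists_eval_eq_finrank_modFilB
    {B : Fin n → Fin p} {g : Fin m → M} {φ : MvPolynomial (Fin p) ℚ} {s : Fin p →₀ ℕ}
    (h : ∀ r ≥ s, eval (fun j => (r j : ℚ)) φ =
      Module.finrank K ((isWeylPair_wx_wd n K).filtration K B g r)) :
    IsNumerical φ ∧ ∃ s : Fin p → ℤ, ∀ r : Fin p → ℤ, (∀ i, s i ≤ r i) →
      eval (fun i => (r i : ℚ)) φ = Module.finrank K (modFilB n p K B M m g r) := by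
  have eval_eq (r : Fin p → ℤ) (hr : ∀ i, (s i : ℤ) ≤ r i) :
      eval (fun i => (r i : ℚ)) φ = Module.finrank K (modFilB n p K B M m g r) := by
    lift r to Fin p → ℕ using fun i => (Int.natCast_nonneg _).trans (hr i)
    have := h (Finsupp.equivFunOnFinite.symm r) fun i => Nat.cast_le.1 (hr i)
    rw [← modFilB_natCast] at this
    exact_mod_cast this
  exact ⟨⟨fun i => s i, fun r hr => ⟨_, mod_cast eval_eq r hr⟩⟩, fun i => s i, eval_eq⟩

end ModFilB

theorem statement_17 (n p : ℕ) (hp : 1 ≤ p) (K : Type) [Field K] [CharZero K]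
    (nn : Fin p → ℕ) (hn : ∑ j, nn j = n)
    (B : Fin n → Fin p) (hBmono : Monotone B)
    (hBcard : ∀ j, (Finset.univ.filter fun i => B i = j).card = nn j)
    (M : Type) [AddCommGroup M] [Module K M] [Module (WeylAlg n K) M]
    [IsScalarTower K (WeylAlg n K) M] [Nontrivial M]
    (m : ℕ) (g : Fin m → M)
    (hgen : Submodule.span (WeylAlg n K) (Set.range g) = ⊤) :
    ∃ φ : MvPolynomial (Fin p) ℚ, IsNumerical φ ∧
      (∃ s : Fin p → ℤ, ∀ r : Fin p → ℤ, (∀ i, s i ≤ r i) →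
        MvPolynomial.eval (fun i => (r i : ℚ)) φ =
          (Module.finrank K (modFilB n p K B M m g r) : ℚ)) ∧
      (∀ i, nn i ≤ φ.degreeOf i ∧ φ.degreeOf i ≤ 2 * nn i) ∧
      n ≤ φ.totalDegree ∧ φ.totalDegree ≤ 2 * n := by
  obtain rfl : (fun j => (Finset.univ.filter fun i => B i = j).card) = nn := funext hBcard
  obtain ⟨φ, ⟨s, hs⟩, hdeg⟩ := statement_17_general (K := K) (isWeylPair_wx_wd n K) B
    (ne_zero_of_span_range_eq_top hgen)
  obtain ⟨φ_numerical, φ_eval⟩ := isNumerical_and_exists_eval_eq_finrank_modFilB hs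
  refine ⟨φ, φ_numerical, φ_eval, ?_⟩
  simpa [Nat.card_eq_fintype_card, Fintype.card_subtype] using hdeg
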